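/- arXiv:2603.29380 — 4 statements merged into one kernel-verified Lean document; each statement's English description precedes it below -/
import Mathlib

section
/- Let N be a natural number, let P : ℝ → Matrix (Fin N) (Fin N) ℝ and π : ℝ → (Fin N → ℝ) be differentiable at a point θ₀ ∈ ℝ, and suppose that for every θ ∈ ℝ the row vector π(θ) satisfies the stationarity relation π(θ) ᵥ* P(θ) = π(θ) and the normalization ∑ i, π(θ) i = 1. Let Z be the inverse of the matrix A := 1 − P(θ₀) + (Matrix.vecMulVec (fun _ => (1:ℝ)) (π θ₀)) (i.e., A = I − P(θ₀) + 𝟙 π(θ₀)ᵀ), and assume A is invertible (IsUnit A.det). Then the derivative of π at θ₀, viewed as a row vector, satisfies deriv π θ₀ = (π θ₀) ᵥ* (deriv P θ₀) * Z, where deriv P θ₀ is the entrywise derivative of P at θ₀. -/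
/-!
For normalized stationary vectors `p` of `P` and `q` of `Q`, put `A = 1 - P + 𝟙 pᵀ`. The rank-one
term sends every normalized vector to `p`, so `q ᵥ* A = q ᵥ* (Q - P) + p`, and in particular
`p ᵥ* A = p`. When `A` is invertible this is Schweitzer's exact perturbation formula
`q - p = q ᵥ* ((Q - P) * A⁻¹)`; dividing by the increment of the parameter and passing to the limit
gives the derivative, as soon as the stationary vector is known to be continuous. Continuity
comes from `q ᵥ* (1 - Q + 𝟙 pᵀ) = p`, which expresses `q` through `Q` because invertibility of `A`
persists for `Q` near `P`.
-/

open Matrix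

section Perturbation

variable {ι R : Type*} [Fintype ι] [CommRing R]

/-- `p` is a stationary row vector of `P` with entries summing to `1`. No sign condition is imposed,
so that the notion makes sense over any commutative ring. -/
structure IsStationaryVector (p : ι → R) (P : Matrix ι ι R) : Prop where
  vecMul_eq : p ᵥ* P = p
  sum_eq_one : ∑ i, p i = 1

variable [DecidableEq ι]

/-- The matrix `1 - P + 𝟙 pᵀ`, whose inverse is the fundamental matrix of a Markov chain with
transition matrix `P` and stationary distribution `p`. -/
def invFundamentalMatrix (P : Matrix ι ι R) (p : ι → R) : Matrix ι ι R :=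
  1 - P + vecMulVec 1 p

theorem eq_vecMul_inv_of_vecMul_eq {v w : ι → R} {A : Matrix ι ι R} (hA : IsUnit A.det)
    (h : v ᵥ* A = w) : v = w ᵥ* A⁻¹ := by
  rw [← h, vecMul_vecMul, mul_nonsing_inv A hA, vecMul_one]

namespace IsStationaryVector

variable {p q : ι → R} {P Q : Matrix ι ι R}

theorem vecMul_invFundamentalMatrix (hq : IsStationaryVector q Q) (P : Matrix ι ι R) (p : ι → R) :
    q ᵥ* invFundamentalMatrix P p = q ᵥ* (Q - P) + p := by
  rw [invFundamentalMatrix, vecMul_add, vecMul_sub, vecMul_sub, vecMul_one, hq.vecMul_eq,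
    vecMul_vecMulVec, dotProduct_one, hq.sum_eq_one, one_smul]

theorem vecMul_invFundamentalMatrix_self (hq : IsStationaryVector q Q) (p : ι → R) :
    q ᵥ* invFundamentalMatrix Q p = p := by
  rw [hq.vecMul_invFundamentalMatrix, sub_self, vecMul_zero, zero_add]

theorem eq_vecMul_inv (hq : IsStationaryVector q Q) (h : IsUnit (invFundamentalMatrix Q p).det) :
    q = p ᵥ* (invFundamentalMatrix Q p)⁻¹ :=
  eq_vecMul_inv_of_vecMul_eq h (hq.vecMul_invFundamentalMatrix_self p)

theorem sub_eq_vecMul_mul_inv (hp : IsStationaryVector p P) (hq : IsStationaryVector q Q)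
    (h : IsUnit (invFundamentalMatrix P p).det) :
    q - p = q ᵥ* ((Q - P) * (invFundamentalMatrix P p)⁻¹) := by
  rw [← vecMul_vecMul]
  apply eq_vecMul_inv_of_vecMul_eq h
  rw [sub_vecMul, hq.vecMul_invFundamentalMatrix, hp.vecMul_invFundamentalMatrix_self,
    add_sub_cancel_right]

end IsStationaryVector

end Perturbation

section Limits

open Filter
open scoped Topology

variable {ι : Type*} [Fintype ι]

theorem tendsto_vecMul {α κ R : Type*} [NonUnitalNonAssocSemiring R] [TopologicalSpace R]
    [IsTopologicalSemiring R] {l : Filter α} {v : α → ι → R} {M : α → Matrix ι κ R}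
    {v₀ : ι → R} {M₀ : Matrix ι κ R}
    (hv : Tendsto v l (𝓝 v₀)) (hM : Tendsto M l (𝓝 M₀)) :
    Tendsto (fun a => v a ᵥ* M a) l (𝓝 (v₀ ᵥ* M₀)) :=
  ((continuous_fst.matrix_vecMul continuous_snd).tendsto (v₀, M₀)).comp (hv.prodMk_nhds hM)

variable [DecidableEq ι]

theorem continuousAt_of_eventually_isStationaryVector {X K : Type*} [TopologicalSpace X] [Field K]
    [TopologicalSpace K] [IsTopologicalDivisionRing K] [T1Space K]
    {P : X → Matrix ι ι K} {π : X → ι → K} {x₀ : X} (hP : ContinuousAt P x₀)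
    (hstat : ∀ᶠ x in 𝓝 x₀, IsStationaryVector (π x) (P x))
    (hunit : IsUnit (invFundamentalMatrix (P x₀) (π x₀)).det) :
    ContinuousAt π x₀ := by
  let B (x : X) := invFundamentalMatrix (P x) (π x₀)
  have hB : ContinuousAt B x₀ := (continuousAt_const.sub hP).add continuousAt_const
  have hdet : ∀ᶠ x in 𝓝 x₀, (B x).det ≠ 0 :=
    (continuous_id.matrix_det.continuousAt.comp hB).eventually_ne hunit.ne_zero
  have hBinv : ContinuousAt (fun x => (B x)⁻¹) x₀ := by
    refine (continuousAt_matrix_inv (B x₀) ?_).comp hB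
    rw [Ring.inverse_eq_inv']
    exact continuousAt_inv₀ hunit.ne_zero
  have hπ : π =ᶠ[𝓝 x₀] fun x => π x₀ ᵥ* (B x)⁻¹ := by
    filter_upwards [hstat, hdet] with x hx hdetx
    exact hx.eq_vecMul_inv hdetx.isUnit
  exact ContinuousAt.congr (tendsto_vecMul tendsto_const_nhds hBinv) hπ.symm

theorem deriv_stationary_distribution_general {𝕜 : Type*} [NontriviallyNormedField 𝕜]
    {P : 𝕜 → Matrix ι ι 𝕜} {P' : Matrix ι ι 𝕜} {π : 𝕜 → ι → 𝕜} {θ₀ : 𝕜}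
    (hP : ∀ i j, HasDerivAt (fun θ => P θ i j) (P' i j) θ₀)
    (hstat : ∀ᶠ θ in 𝓝 θ₀, IsStationaryVector (π θ) (P θ))
    (hunit : IsUnit (invFundamentalMatrix (P θ₀) (π θ₀)).det) :
    HasDerivAt π (π θ₀ ᵥ* (P' * (invFundamentalMatrix (P θ₀) (π θ₀))⁻¹)) θ₀ := by
  let Z := (invFundamentalMatrix (P θ₀) (π θ₀))⁻¹
  have hPcont : ContinuousAt P θ₀ :=
    tendsto_pi_nhds.2 fun i => tendsto_pi_nhds.2 fun j => (hP i j).continuousAt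
  have hπcont : Tendsto π (𝓝[≠] θ₀) (𝓝 (π θ₀)) :=
    (continuousAt_of_eventually_isStationaryVector hPcont hstat hunit).mono_left nhdsWithin_le_nhds
  have hPslope : Tendsto (slope P θ₀) (𝓝[≠] θ₀) (𝓝 P') :=
    tendsto_pi_nhds.2 fun i => tendsto_pi_nhds.2 fun j => (hP i j).tendsto_slope
  have hπslope : (fun θ => π θ ᵥ* (slope P θ₀ θ * Z)) =ᶠ[𝓝[≠] θ₀] slope π θ₀ := by
    filter_upwards [hstat.filter_mono nhdsWithin_le_nhds] with θ hθ
    rw [slope_def_module, slope_def_module, hstat.self_of_nhds.sub_eq_vecMul_mul_inv hθ hunit,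
      smul_mul_assoc, vecMul_smul]
  rw [hasDerivAt_iff_tendsto_slope]
  exact (tendsto_vecMul hπcont (hPslope.mul_const Z)).congr' hπslope

end Limits

/-- Derivative of the stationary distribution of a parameterized Markov chain:
if `π θ ᵥ* P θ = π θ` and `∑ i, π θ i = 1` for all `θ`, and
`A = I − P θ₀ + 𝟙 π(θ₀)ᵀ` is invertible with inverse `Z = A⁻¹`, then
`deriv π θ₀ = (π θ₀) ᵥ* (deriv P θ₀) * Z`, where `deriv P θ₀` is the
entrywise derivative of `P` at `θ₀`. -/
theorem deriv_stationary_distribution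
    (N : ℕ) (P : ℝ → Matrix (Fin N) (Fin N) ℝ) (π : ℝ → (Fin N → ℝ)) (θ₀ : ℝ)
    (hP : ∀ i j, DifferentiableAt ℝ (fun θ => P θ i j) θ₀)
    (hπ : DifferentiableAt ℝ π θ₀)
    (hstat : ∀ θ, (π θ) ᵥ* (P θ) = π θ)
    (hnorm : ∀ θ, ∑ i, π θ i = 1)
    (A : Matrix (Fin N) (Fin N) ℝ)
    (hA : A = 1 - P θ₀ + Matrix.vecMulVec (fun _ => (1 : ℝ)) (π θ₀))
    (hAunit : IsUnit A.det) :
    deriv π θ₀ =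
      (π θ₀) ᵥ* ((Matrix.of fun i j => deriv (fun θ => P θ i j) θ₀) * A⁻¹) := by
  subst hA
  exact (deriv_stationary_distribution_general (fun i j => (hP i j).hasDerivAt)
    (.of_forall fun θ => ⟨hstat θ, hnorm θ⟩) hAunit).deriv
end

section
/- Let N be a natural number, let P : ℝ → Matrix (Fin N) (Fin N) ℝ, π : ℝ → (Fin N → ℝ), and h : ℝ → (Fin N → ℝ) all be differentiable at a point θ₀ ∈ ℝ, and suppose that for every θ ∈ ℝ the row vector π(θ) satisfies π(θ) ᵥ* P(θ) = π(θ) and ∑ i, π(θ) i = 1. Let Z be the inverse of the matrix A := 1 − P(θ₀) + Matrix.vecMulVec (fun _ => (1:ℝ)) (π θ₀), assumed invertible (IsUnit A.det). Define J : ℝ → ℝ by J(θ) = (π θ) ⬝ᵥ (h θ). Then J is differentiable at θ₀ and deriv J θ₀ = ((π θ₀) ᵥ* (deriv P θ₀) * Z) ⬝ᵥ (h θ₀) + (π θ₀) ⬝ᵥ (deriv h θ₀). -/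
open Matrix

/-!
For row vectors `p = p P` and `q = q Q` of equal mass and any `v`, multiplying `q - p` by
`A = 1 - P + 𝟙 vᵀ` cancels the rank-one term and leaves the perturbation identity
`q - p = q (Q - P) A⁻¹`. Applied to `p = π θ₀` and `q = π θ`, it expresses the difference quotient
of `π` through that of `P`. Hence `π` is differentiable with `π' = π P' A⁻¹` as soon as it is
continuous, and it is continuous because `π θ` solves the linear system
`π θ (1 - P θ + 𝟙 vᵀ) = vᵀ`, which is invertible at `θ₀`. The product rule finishes the proof.
-/

open Filter Topology

section Perturbation

variable {n R : Type*} [Fintype n] [DecidableEq n] [CommRing R] {P Q : Matrix n n R} {p q : n → R}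

theorem vecMul_one_sub_add_vecMulVec (hp : p ᵥ* P = p) (u v : n → R) :
    p ᵥ* (1 - P + vecMulVec u v) = (p ⬝ᵥ u) • v := by
  rw [vecMul_add, vecMul_sub, vecMul_one, hp, sub_self, zero_add, vecMul_vecMulVec]

theorem sub_eq_vecMul_sub_mul_inv {u v : n → R} (hp : p ᵥ* P = p) (hq : q ᵥ* Q = q)
    (hpq : p ⬝ᵥ u = q ⬝ᵥ u) (hdet : IsUnit (1 - P + vecMulVec u v).det) :
    q - p = q ᵥ* ((Q - P) * (1 - P + vecMulVec u v)⁻¹) := by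
  set A := 1 - P + vecMulVec u v with hA
  have hsplit : A = 1 - Q + vecMulVec u v + (Q - P) := by rw [hA]; abel
  have hqA : q ᵥ* A = (q ⬝ᵥ u) • v + q ᵥ* (Q - P) := by
    rw [hsplit, vecMul_add, vecMul_one_sub_add_vecMulVec hq]
  have hmul : (q - p) ᵥ* A = q ᵥ* (Q - P) := by
    rw [sub_vecMul, hqA, vecMul_one_sub_add_vecMulVec hp, hpq, add_sub_cancel_left]
  rw [← vecMul_vecMul, ← hmul, vecMul_vecMul, mul_nonsing_inv A hdet, vecMul_one]

end Perturbation

theorem continuousAt_of_vecMul_eq {X n K : Type*} [TopologicalSpace X] [Fintype n] [DecidableEq n]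
    [Field K] [TopologicalSpace K] [IsTopologicalDivisionRing K] [T1Space K]
    {A : X → Matrix n n K} {p b : X → n → K} {x : X} (hA : ContinuousAt A x)
    (hb : ContinuousAt b x) (hdet : IsUnit (A x).det) (hp : ∀ᶠ y in 𝓝 x, p y ᵥ* A y = b y) :
    ContinuousAt p x := by
  have hdet_ne : ∀ᶠ y in 𝓝 x, (A y).det ≠ 0 :=
    (continuous_id.matrix_det.continuousAt.comp hA).eventually_ne hdet.ne_zero
  have hsolve : (fun y => b y ᵥ* (A y)⁻¹) =ᶠ[𝓝 x] p := by
    filter_upwards [hp, hdet_ne] with y hy hy_det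
    rw [← hy, vecMul_vecMul, mul_nonsing_inv _ hy_det.isUnit, vecMul_one]
  have hinv : ContinuousAt (fun y => (A y)⁻¹) x := by
    refine (continuousAt_matrix_inv (A x) ?_).comp hA
    rw [Ring.inverse_eq_inv']
    exact continuousAt_inv₀ hdet.ne_zero
  exact ((continuous_fst.matrix_vecMul continuous_snd).continuousAt.comp
    (hb.prodMk hinv)).congr hsolve

section Derivative

variable {n 𝕜 : Type*} [Fintype n] [NontriviallyNormedField 𝕜] {t : 𝕜}

theorem hasDerivAt_dotProduct {f g : 𝕜 → n → 𝕜} {f' g' : n → 𝕜} (hf : HasDerivAt f f' t)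
    (hg : HasDerivAt g g' t) :
    HasDerivAt (fun s => f s ⬝ᵥ g s) (f' ⬝ᵥ g t + f t ⬝ᵥ g') t := by
  have hsum := HasDerivAt.fun_sum (u := Finset.univ) fun i _ =>
    (hasDerivAt_pi.1 hf i).fun_mul (hasDerivAt_pi.1 hg i)
  simpa only [dotProduct, Finset.sum_add_distrib] using hsum

variable [DecidableEq n] {P : 𝕜 → Matrix n n 𝕜} {P' : Matrix n n 𝕜} {p : 𝕜 → n → 𝕜}
  {u v : n → 𝕜} {c : 𝕜}

theorem continuousAt_of_vecMul_eq_self (hP : ContinuousAt P t)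
    (hstat : ∀ᶠ s in 𝓝 t, p s ᵥ* P s = p s) (hmass : ∀ᶠ s in 𝓝 t, p s ⬝ᵥ u = c)
    (hdet : IsUnit (1 - P t + vecMulVec u v).det) : ContinuousAt p t := by
  have hsystem : ∀ᶠ s in 𝓝 t, p s ᵥ* (1 - P s + vecMulVec u v) = c • v := by
    filter_upwards [hstat, hmass] with s hs hs_mass
    rw [vecMul_one_sub_add_vecMulVec hs, hs_mass]
  exact continuousAt_of_vecMul_eq ((continuousAt_const.sub hP).add continuousAt_const)
    continuousAt_const hdet hsystem

theorem hasDerivAt_of_vecMul_eq_self (hP : ∀ i j, HasDerivAt (fun s => P s i j) (P' i j) t)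
    (hstat : ∀ᶠ s in 𝓝 t, p s ᵥ* P s = p s) (hmass : ∀ᶠ s in 𝓝 t, p s ⬝ᵥ u = c)
    (hdet : IsUnit (1 - P t + vecMulVec u v).det) :
    HasDerivAt p (p t ᵥ* (P' * (1 - P t + vecMulVec u v)⁻¹)) t := by
  set A := 1 - P t + vecMulVec u v
  have hP_cont : ContinuousAt P t :=
    continuousAt_pi.2 fun i => continuousAt_pi.2 fun j => (hP i j).continuousAt
  have hp_cont : ContinuousAt p t := continuousAt_of_vecMul_eq_self hP_cont hstat hmass hdet
  have hP_slope : Tendsto (slope P t) (𝓝[≠] t) (𝓝 P') :=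
    tendsto_pi_nhds.2 fun i => tendsto_pi_nhds.2 fun j => (hP i j).tendsto_slope
  have hp_slope : ∀ᶠ s in 𝓝 t, p s ᵥ* (slope P t s * A⁻¹) = slope p t s := by
    filter_upwards [hstat, hmass] with s hs hs_mass
    have hdiff : p s - p t = p s ᵥ* ((P s - P t) * A⁻¹) :=
      sub_eq_vecMul_sub_mul_inv hstat.self_of_nhds hs (hmass.self_of_nhds.trans hs_mass.symm) hdet
    rw [slope_def_module, slope_def_module, hdiff, smul_mul, vecMul_smul]
  have hcont : Continuous fun x : (n → 𝕜) × Matrix n n 𝕜 => x.1 ᵥ* (x.2 * A⁻¹) := by fun_prop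
  rw [hasDerivAt_iff_tendsto_slope]
  exact ((hcont.tendsto (p t, P')).comp
    ((hp_cont.tendsto.mono_left nhdsWithin_le_nhds).prodMk_nhds hP_slope)).congr'
      (hp_slope.filter_mono nhdsWithin_le_nhds)

theorem deriv_long_run_average_cost_general {h : 𝕜 → n → 𝕜} {h' : n → 𝕜}
    (hP : ∀ i j, HasDerivAt (fun s => P s i j) (P' i j) t) (hh : HasDerivAt h h' t)
    (hstat : ∀ᶠ s in 𝓝 t, p s ᵥ* P s = p s) (hmass : ∀ᶠ s in 𝓝 t, p s ⬝ᵥ u = c)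
    (hdet : IsUnit (1 - P t + vecMulVec u v).det) :
    HasDerivAt (fun s => p s ⬝ᵥ h s)
      ((p t ᵥ* (P' * (1 - P t + vecMulVec u v)⁻¹)) ⬝ᵥ h t + p t ⬝ᵥ h') t :=
  hasDerivAt_dotProduct (hasDerivAt_of_vecMul_eq_self hP hstat hmass hdet) hh

end Derivative

/-- Derivative of the long-run average cost `J θ = π θ ⬝ᵥ h θ` of a parameterized
Markov chain: `J` is differentiable at `θ₀`, and
`deriv J θ₀ = ((π θ₀) ᵥ* (deriv P θ₀) * Z) ⬝ᵥ h θ₀ + (π θ₀) ⬝ᵥ deriv h θ₀`,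
where `Z = A⁻¹` with `A = I − P θ₀ + 𝟙 π(θ₀)ᵀ` invertible. -/
theorem deriv_long_run_average_cost
    (N : ℕ) (P : ℝ → Matrix (Fin N) (Fin N) ℝ) (π : ℝ → (Fin N → ℝ))
    (h : ℝ → (Fin N → ℝ)) (θ₀ : ℝ)
    (hP : ∀ i j, DifferentiableAt ℝ (fun θ => P θ i j) θ₀)
    (hπ : DifferentiableAt ℝ π θ₀)
    (hh : DifferentiableAt ℝ h θ₀)
    (hstat : ∀ θ, (π θ) ᵥ* (P θ) = π θ)
    (hnorm : ∀ θ, ∑ i, π θ i = 1)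
    (A : Matrix (Fin N) (Fin N) ℝ)
    (hA : A = 1 - P θ₀ + Matrix.vecMulVec (fun _ => (1 : ℝ)) (π θ₀))
    (hAunit : IsUnit A.det)
    (J : ℝ → ℝ) (hJ : ∀ θ, J θ = (π θ) ⬝ᵥ (h θ)) :
    DifferentiableAt ℝ J θ₀ ∧
      deriv J θ₀ =
        ((π θ₀) ᵥ* ((Matrix.of fun i j => deriv (fun θ => P θ i j) θ₀) * A⁻¹)) ⬝ᵥ (h θ₀)
          + (π θ₀) ⬝ᵥ (deriv h θ₀) := by
  subst hA
  obtain rfl : J = fun θ => π θ ⬝ᵥ h θ := funext hJ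
  have hmass : ∀ θ, π θ ⬝ᵥ (fun _ => (1 : ℝ)) = 1 := fun θ => (dotProduct_one _).trans (hnorm θ)
  have hderiv := deriv_long_run_average_cost_general
    (P' := of fun i j => deriv (fun θ => P θ i j) θ₀) (fun i j => (hP i j).hasDerivAt)
    hh.hasDerivAt (.of_forall hstat) (.of_forall hmass) hAunit
  exact ⟨hderiv.differentiableAt, hderiv.deriv⟩
end

section
/- Let E be a real inner product space, let J : E → ℝ be differentiable with gradient g := gradient J, and suppose g is L-Lipschitz: ‖g x − g y‖ ≤ L*‖x − y‖ for all x, y. Let θ ∈ E, let M, M⋆ : E →L[ℝ] E be continuous linear maps, let z ∈ E, let a > 0 and λ_c > 0, and assume ⟪x, M⋆ x⟫ ≥ λ_c*‖x‖² for all x ∈ E. Set θ' := θ − a • (M z). Then a*λ_c*‖g θ‖² ≤ (J θ − J θ') − a*⟪g θ, (M − M⋆) z⟫ − a*⟪g θ, M⋆ (z − g θ)⟫ + (L/2)*a²*‖M z‖². -/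
open scoped RealInnerProductSpace

/-!
The Lipschitz bound makes the slope of `J` grow at most linearly along the segment from `θ` to
`θ - a • M z`; comparison with a parabola then bounds the change of `J` over this step by
`-a * ⟪∇J θ, M z⟫ + L / 2 * a ^ 2 * ‖M z‖ ^ 2`. Splitting
`M z = M⋆ (∇J θ) + (M - M⋆) z + M⋆ (z - ∇J θ)` isolates the exact Newton direction `M⋆ (∇J θ)`,
along which coercivity of `M⋆` guarantees a decrease of at least `a * lc * ‖∇J θ‖ ^ 2`.
-/

open Set

theorem image_le_quadratic_of_deriv_right_le_affine {f f' : ℝ → ℝ} {a b m C : ℝ}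
    (hf : ContinuousOn f (Icc a b))
    (hf' : ∀ t ∈ Ico a b, HasDerivWithinAt f (f' t) (Ici t) t)
    (bound : ∀ t ∈ Ico a b, f' t ≤ m + C * (t - a)) ⦃x : ℝ⦄ (hx : x ∈ Icc a b) :
    f x ≤ f a + m * (x - a) + C / 2 * (x - a) ^ 2 := by
  have hquad (t : ℝ) :
      HasDerivAt (fun s ↦ f a + m * (s - a) + C / 2 * (s - a) ^ 2) (m + C * (t - a)) t := by
    have hsub : HasDerivAt (fun s ↦ s - a) 1 t := (hasDerivAt_id t).sub_const a
    have hsum := ((hsub.const_mul m).const_add (f a)).add ((hsub.pow 2).const_mul (C / 2))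
    refine hsum.congr_deriv ?_
    push_cast
    ring
  exact image_le_of_deriv_right_le_deriv_boundary hf hf' (by simp)
    (fun t _ ↦ (hquad t).continuousAt.continuousWithinAt)
    (fun t _ ↦ (hquad t).hasDerivWithinAt) bound hx

section NormedSpace

variable {E : Type*} [NormedAddCommGroup E] [NormedSpace ℝ E] {s : Set E} {x y : E}

theorem apply_le_add_mul_norm_of_norm_sub_le {φ ψ : E →L[ℝ] ℝ} {c : ℝ} (h : ‖φ - ψ‖ ≤ c) (v : E) :
    φ v ≤ ψ v + c * ‖v‖ := by
  have hsub : φ v - ψ v ≤ c * ‖v‖ := (Real.le_norm_self _).trans ((φ - ψ).le_of_opNorm_le h v)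
  linarith

theorem image_le_add_fderiv_add_sq_of_norm_fderiv_sub_le {f : E → ℝ} {f' : E → E →L[ℝ] ℝ} {L : ℝ}
    (hs : StarConvex ℝ x s) (hf : ∀ z ∈ s, HasFDerivWithinAt f (f' z) s z)
    (hL : ∀ z ∈ s, ‖f' z - f' x‖ ≤ L * ‖z - x‖) (hy : y ∈ s) :
    f y ≤ f x + f' x (y - x) + L / 2 * ‖y - x‖ ^ 2 := by
  let γ : ℝ → E := AffineMap.lineMap x y
  have hγ : MapsTo γ (Icc 0 1) s :=
    fun _ ht ↦ hs.segment_subset hy (lineMap_mem_segment ℝ x y ht)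
  have hderiv : ∀ t ∈ Icc (0 : ℝ) 1,
      HasDerivWithinAt (f ∘ γ) (f' (γ t) (y - x)) (Icc 0 1) t := fun t ht ↦
    (hf _ (hγ ht)).comp_hasDerivWithinAt t AffineMap.hasDerivWithinAt_lineMap hγ
  have hslope : ∀ t ∈ Ico (0 : ℝ) 1,
      f' (γ t) (y - x) ≤ f' x (y - x) + L * ‖y - x‖ ^ 2 * (t - 0) := by
    intro t ht
    have hdist : ‖γ t - x‖ = t * ‖y - x‖ := by
      simp [γ, AffineMap.lineMap_apply, norm_smul, abs_of_nonneg ht.1]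
    have hle := apply_le_add_mul_norm_of_norm_sub_le (hL _ (hγ (Ico_subset_Icc_self ht))) (y - x)
    rw [hdist] at hle
    linarith
  have hle := image_le_quadratic_of_deriv_right_le_affine
    (fun t ht ↦ (hderiv t ht).continuousWithinAt)
    (fun t ht ↦ (hderiv t (Ico_subset_Icc_self ht)).mono_of_mem_nhdsWithin
      (Icc_mem_nhdsGE_of_mem ht))
    hslope (right_mem_Icc.2 zero_le_one)
  simp only [γ, Function.comp_apply, AffineMap.lineMap_apply_zero, AffineMap.lineMap_apply_one]
    at hle
  linarith

end NormedSpace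

section InnerProductSpace

variable {E : Type*} [NormedAddCommGroup E] [InnerProductSpace ℝ E] [CompleteSpace E]
  {J : E → ℝ} {g : E → E} {s : Set E} {L : ℝ}

theorem image_le_add_inner_add_sq_of_norm_gradient_sub_le {x y : E} (hs : StarConvex ℝ x s)
    (hJ : ∀ z ∈ s, HasGradientWithinAt J (g z) s z)
    (hL : ∀ z ∈ s, ‖g z - g x‖ ≤ L * ‖z - x‖) (hy : y ∈ s) :
    J y ≤ J x + ⟪g x, y - x⟫ + L / 2 * ‖y - x‖ ^ 2 := by
  refine image_le_add_fderiv_add_sq_of_norm_fderiv_sub_le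
    (f' := fun z ↦ InnerProductSpace.toDual ℝ E (g z)) hs
    (fun z hz ↦ (hJ z hz).hasFDerivWithinAt) (fun z hz ↦ ?_) hy
  rw [← map_sub, LinearIsometryEquiv.norm_map]
  exact hL z hz

theorem image_sub_smul_le_of_norm_gradient_sub_le {x p : E} {a : ℝ} (hs : StarConvex ℝ x s)
    (hJ : ∀ z ∈ s, HasGradientWithinAt J (g z) s z)
    (hL : ∀ z ∈ s, ‖g z - g x‖ ≤ L * ‖z - x‖) (hp : x - a • p ∈ s) :
    J (x - a • p) ≤ J x - a * ⟪g x, p⟫ + L / 2 * a ^ 2 * ‖p‖ ^ 2 := by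
  have hle := image_le_add_inner_add_sq_of_norm_gradient_sub_le hs hJ hL hp
  rw [sub_sub_cancel_left, inner_neg_right, real_inner_smul_right, norm_neg, norm_smul, mul_pow,
    Real.norm_eq_abs, sq_abs] at hle
  linarith

theorem nsf1_descent_inequality_general {θ z : E} {M Mstar : E →ₗ[ℝ] E} {a lc : ℝ}
    (hs : StarConvex ℝ θ s) (hJ : ∀ x ∈ s, HasGradientWithinAt J (g x) s x)
    (hL : ∀ x ∈ s, ‖g x - g θ‖ ≤ L * ‖x - θ‖) (hstep : θ - a • M z ∈ s) (ha : 0 ≤ a)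
    (hcoercive : lc * ‖g θ‖ ^ 2 ≤ ⟪g θ, Mstar (g θ)⟫) :
    a * lc * ‖g θ‖ ^ 2 ≤
      (J θ - J (θ - a • M z)) - a * ⟪g θ, (M - Mstar) z⟫ - a * ⟪g θ, Mstar (z - g θ)⟫
        + L / 2 * a ^ 2 * ‖M z‖ ^ 2 := by
  have hdescent := image_sub_smul_le_of_norm_gradient_sub_le hs hJ hL hstep
  have hsplit : M z = Mstar (g θ) + (M - Mstar) z + Mstar (z - g θ) := by
    rw [LinearMap.sub_apply, map_sub]
    abel
  have hinner : ⟪g θ, M z⟫ =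
      ⟪g θ, Mstar (g θ)⟫ + ⟪g θ, (M - Mstar) z⟫ + ⟪g θ, Mstar (z - g θ)⟫ := by
    rw [hsplit, inner_add_right, inner_add_right]
  rw [hinner] at hdescent
  linarith [mul_le_mul_of_nonneg_left hcoercive ha]

end InnerProductSpace

/-- Per-iteration descent inequality for the damped Newton step of NSF1:
if `∇J` is `L`-Lipschitz, `M⋆` is positive definite with smallest eigenvalue
at least `λ_c`, and `θ' = θ − a • (M z)`, then
`a λ_c ‖∇J(θ)‖² ≤ (J θ − J θ') − a⟪∇J θ, (M−M⋆)z⟫ − a⟪∇J θ, M⋆(z−∇J θ)⟫ + (L/2)a²‖Mz‖²`. -/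
theorem nsf1_descent_inequality
    (E : Type*) [NormedAddCommGroup E] [InnerProductSpace ℝ E] [CompleteSpace E]
    (J : E → ℝ) (hJ : Differentiable ℝ J) (L : ℝ)
    (hLip : ∀ x y : E, ‖gradient J x - gradient J y‖ ≤ L * ‖x - y‖)
    (θ : E) (M Mstar : E →L[ℝ] E) (z : E) (a lc : ℝ)
    (ha : 0 < a) (hlc : 0 < lc)
    (hPD : ∀ x : E, ⟪x, Mstar x⟫ ≥ lc * ‖x‖ ^ 2) :
    a * lc * ‖gradient J θ‖ ^ 2 ≤
      (J θ - J (θ - a • (M z)))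
        - a * ⟪gradient J θ, (M - Mstar) z⟫
        - a * ⟪gradient J θ, Mstar (z - gradient J θ)⟫
        + (L / 2) * a ^ 2 * ‖M z‖ ^ 2 := by
  exact nsf1_descent_inequality_general (M := M.toLinearMap) (Mstar := Mstar.toLinearMap)
    (starConvex_univ θ) (fun x _ ↦ hasGradientWithinAt_univ.2 (hJ x).hasGradientAt)
    (fun x _ ↦ hLip x θ) (mem_univ _) ha.le (hPD (gradient J θ))
end

section
/- For all real numbers ν, α, σ with 0 < ν < α < σ < 1, min (1−σ) (min ν (2*(σ−α))) < 2/5; moreover, for every δ > 0 there exist real ν, α, σ with 0 < ν < α < σ < 1 and min (1−σ) (min ν (2*(σ−α))) > 2/5 − δ. Hence the best achievable finite-time rate exponent of the NSF1 bound min(1−σ, ν, 2(σ−α)) has supremum 2/5 over admissible three-time-scale step-size exponents, approached as ν → 2/5, α → ν, σ → 3/5. -/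
/-! Weighting the three competing exponents `1 - σ`, `ν`, `2 * (σ - α)` by `2 : 2 : 1` eliminates
`σ`, so their minimum is at most `2 / 5 * (1 - (α - ν))`. Balancing the three exponents attains
this bound for every gap `α - ν`; the gap must be positive but can be arbitrarily small. -/

section RateExponent

variable {K : Type*} [Field K] [LinearOrder K]

/-- The largest `r` for which the NSF1 finite-time bound
`O(T^(σ-1)) + O(T^(-ν)) + O(T^(-2(σ-α)))` is `O(T^(-r))`. The step-size exponents are listed in
their admissible order `ν < α < σ`, and no admissibility condition is built in. -/
def nsf1RateExponent (ν α σ : K) : K :=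
  min (1 - σ) (min ν (2 * (σ - α)))

variable [IsStrictOrderedRing K]

theorem nsf1RateExponent_le (ν α σ : K) :
    nsf1RateExponent ν α σ ≤ 2 / 5 * (1 - (α - ν)) := by
  have hσ : nsf1RateExponent ν α σ ≤ 1 - σ := min_le_left _ _
  have hν : nsf1RateExponent ν α σ ≤ ν := (min_le_right _ _).trans (min_le_left _ _)
  have hσα : nsf1RateExponent ν α σ ≤ 2 * (σ - α) := (min_le_right _ _).trans (min_le_right _ _)
  calc
    nsf1RateExponent ν α σ
      = (2 * nsf1RateExponent ν α σ + 2 * nsf1RateExponent ν α σ +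
          nsf1RateExponent ν α σ) / 5 := by ring
    _ ≤ (2 * (1 - σ) + 2 * ν + 2 * (σ - α)) / 5 := by gcongr
    _ = 2 / 5 * (1 - (α - ν)) := by ring

/-- The exponents solve `1 - σ = ν = 2 * (σ - α)` together with `α - ν = gap`. -/
theorem nsf1RateExponent_balanced (gap : K) :
    nsf1RateExponent (2 / 5 * (1 - gap)) (2 / 5 + 3 / 5 * gap) (3 / 5 + 2 / 5 * gap) =
      2 / 5 * (1 - gap) := by
  have hσ : 1 - (3 / 5 + 2 / 5 * gap) = 2 / 5 * (1 - gap) := by ring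
  have hσα : 2 * (3 / 5 + 2 / 5 * gap - (2 / 5 + 3 / 5 * gap)) = 2 / 5 * (1 - gap) := by ring
  rw [nsf1RateExponent, hσ, hσα, min_self, min_self]

theorem nsf1_optimal_rate_exponent_general :
    (∀ ν α σ : K, ν < α → nsf1RateExponent ν α σ < 2 / 5) ∧
    (∀ δ : K, 0 < δ → ∃ ν α σ : K, 0 < ν ∧ ν < α ∧ α < σ ∧ σ < 1 ∧
      2 / 5 - δ < nsf1RateExponent ν α σ) := by
  refine ⟨fun ν α σ hνα => (nsf1RateExponent_le ν α σ).trans_lt (by linarith), fun δ hδ => ?_⟩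
  obtain ⟨gap, hgap, hgap_lt⟩ := exists_between (lt_min hδ one_pos)
  obtain ⟨hgapδ, hgap_one⟩ := lt_min_iff.mp hgap_lt
  refine ⟨2 / 5 * (1 - gap), 2 / 5 + 3 / 5 * gap, 3 / 5 + 2 / 5 * gap,
    by linarith, by linarith, by linarith, by linarith, ?_⟩
  rw [nsf1RateExponent_balanced]
  linarith

end RateExponent

/-- Optimal NSF1 rate exponent: over admissible three-time-scale step-size
exponents `0 < ν < α < σ < 1`, the rate exponent `min(1−σ, ν, 2(σ−α))` is
always strictly below `2/5`, but comes within any `δ > 0` of `2/5`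
(approached as `ν → 2/5`, `α → ν`, `σ → 3/5`). -/
theorem nsf1_optimal_rate_exponent :
    (∀ ν α σ : ℝ, 0 < ν → ν < α → α < σ → σ < 1 →
      min (1 - σ) (min ν (2 * (σ - α))) < 2 / 5) ∧
    (∀ δ : ℝ, 0 < δ → ∃ ν α σ : ℝ, 0 < ν ∧ ν < α ∧ α < σ ∧ σ < 1 ∧
      min (1 - σ) (min ν (2 * (σ - α))) > 2 / 5 - δ) :=
  nsf1_optimal_rate_exponent_general.imp_left fun h ν α σ _ hνα _ _ => h ν α σ hνα
end
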